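/- For α ∈ (0, π], let 𝕊_α be the circular sector of the unit disk between angles 0 and α, and △_α the triangle with vertices O=(0,0), A=(1,0), B=(cos α, sin α). Then (1/π)∫_{𝕊_α} d²(x, △_α) dx = (1/(2π))( α/4 − (13/12) sin α + α cos²(α/2) − (1/3) sin(α/2) cos³(α/2) ), where for x ∈ 𝕊_α \ △_α the distance d(x, △_α) equals the distance from x to the chord AB, namely for x = (r cos θ, r sin θ) it is r cos(θ − α/2) − cos(α/2). -/

import Mathlib

open Real MeasureTheory

noncomputable def pt (x y : ℝ) : EuclideanSpace ℝ (Fin 2) :=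
  (WithLp.equiv 2 (Fin 2 → ℝ)).symm ![x, y]

/-- The circular sector of the unit disk between angles `0` and `α`. -/
def sector (α : ℝ) : Set (EuclideanSpace ℝ (Fin 2)) :=
  {p | ∃ r θ : ℝ, r ∈ Set.Icc (0 : ℝ) 1 ∧ θ ∈ Set.Icc (0 : ℝ) α ∧
    p = pt (r * Real.cos θ) (r * Real.sin θ)}

/-- The triangle with vertices `O`, `A = (1,0)` and `B = (cos α, sin α)`. -/
noncomputable def tri (α : ℝ) : Set (EuclideanSpace ℝ (Fin 2)) :=
  convexHull ℝ {pt 0 0, pt 1 0, pt (Real.cos α) (Real.sin α)}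

noncomputable def Ifun (α : ℝ) : ℝ :=
  (1 / (2 * π)) * (α / 4 - 13 / 12 * Real.sin α + α * Real.cos (α / 2) ^ 2 -
    1 / 3 * Real.sin (α / 2) * Real.cos (α / 2) ^ 3)

/-!
Let `u` be the unit vector along the bisector of the sector. The chord `AB` is orthogonal to `u` and
the triangle lies in the half-plane `⟪p, u⟫ ≤ cos (α / 2)`. A point of the sector beyond the chord
projects orthogonally onto the chord itself, since its component along the chord is at most the
half-chord `sin (α / 2)`; the other points of the sector are in the triangle. So the distance from
`(r cos θ, r sin θ)` to the triangle is the positive part of `r cos (θ - α / 2) - cos (α / 2)`. In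
polar coordinates the radial integral of its square is a polynomial in `k = cos (θ - α / 2)` plus a
multiple of `1 / k ^ 2`, and the latter integrates to a tangent.
-/

open Set
open scoped RealInnerProductSpace

section Distance

variable {E : Type*}

theorem smul_add_smul_mem_convexHull_zero_sub_add [AddCommGroup E] [Module ℝ E] {m h : E} {x y : ℝ}
    (hyx : |y| ≤ x) (hx : x ≤ 1) : x • m + y • h ∈ convexHull ℝ {0, m - h, m + h} := by
  obtain ⟨hy, hy'⟩ := abs_le.1 hyx
  have hmem : ∀ p ∈ ({0, m - h, m + h} : Set E), p ∈ convexHull ℝ {0, m - h, m + h} :=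
    fun p hp ↦ subset_convexHull ℝ _ hp
  have hsum := (convex_convexHull ℝ {0, m - h, m + h}).sum_mem (t := Finset.univ)
    (w := ![1 - x, (x - y) / 2, (x + y) / 2]) (z := ![0, m - h, m + h])
    (by intro i _; fin_cases i <;> simp <;> linarith)
    (by simp [Fin.sum_univ_three]; ring)
    (by intro i _; fin_cases i <;> exact hmem _ (by simp))
  convert hsum using 1
  simp only [Fin.sum_univ_three, Matrix.cons_val]
  module

variable [NormedAddCommGroup E] [InnerProductSpace ℝ E]

theorem infDist_eq_inner_sub {S : Set E} {u x : E} {c : ℝ} (hu : ‖u‖ = 1)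
    (hS : ∀ p ∈ S, ⟪p, u⟫ ≤ c) (hc : c ≤ ⟪x, u⟫) (hfoot : x - (⟪x, u⟫ - c) • u ∈ S) :
    Metric.infDist x S = ⟪x, u⟫ - c := by
  apply le_antisymm
  · calc Metric.infDist x S ≤ dist x (x - (⟪x, u⟫ - c) • u) := Metric.infDist_le_dist_of_mem hfoot
      _ = ⟪x, u⟫ - c := by
        rw [dist_eq_norm, sub_sub_cancel, norm_smul, hu, mul_one, Real.norm_of_nonneg (by linarith)]
  · refine (Metric.le_infDist ⟨_, hfoot⟩).2 fun p hp ↦ ?_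
    calc ⟪x, u⟫ - c ≤ ⟪x - p, u⟫ := by rw [inner_sub_left]; linarith [hS p hp]
      _ ≤ ‖x - p‖ * ‖u‖ := real_inner_le_norm _ _
      _ = dist x p := by rw [hu, mul_one, dist_eq_norm]

theorem infDist_convexHull_isosceles {u h : E} {c x y : ℝ} (hu : ‖u‖ = 1) (huh : ⟪h, u⟫ = 0)
    (hc : 0 ≤ c) (hy : |y| ≤ 1) (hyx : |y| * c ≤ x) :
    Metric.infDist (x • u + y • h) (convexHull ℝ {0, c • u - h, c • u + h}) = max (x - c) 0 := by
  have huu : ⟪u, u⟫ = 1 := by rw [real_inner_self_eq_norm_sq, hu, one_pow]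
  rcases le_total x c with hxc | hcx
  · rw [max_eq_right (by linarith)]
    apply Metric.infDist_zero_of_mem
    rcases hc.eq_or_lt with rfl | hc
    · obtain rfl : x = 0 := le_antisymm hxc (by simpa using hyx)
      simpa using smul_add_smul_mem_convexHull_zero_sub_add (m := (0 : ℝ) • u) (h := h) hy le_rfl
    · have hmem := smul_add_smul_mem_convexHull_zero_sub_add (m := c • u) (h := h)
        ((le_div_iff₀ hc).2 hyx) ((div_le_one hc).2 hxc)
      rwa [smul_smul, div_mul_cancel₀ x hc.ne'] at hmem
  · have hinner : ⟪x • u + y • h, u⟫ = x := by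
      simp only [inner_add_left, real_inner_smul_left, huu, huh]
      ring
    have hhalf : convexHull ℝ {0, c • u - h, c • u + h} ⊆ {p | ⟪p, u⟫ ≤ c} := by
      refine convexHull_min ?_ (convex_halfSpace_le ((innerₗ E).flip u).isLinear c)
      rintro p (rfl | rfl | rfl) <;>
        simp [inner_add_left, inner_sub_left, real_inner_smul_left, hu, huh, hc]
    have hfoot : x • u + y • h - (⟪x • u + y • h, u⟫ - c) • u = (1 : ℝ) • c • u + y • h := by
      rw [hinner]
      module
    rw [infDist_eq_inner_sub hu hhalf (hcx.trans_eq hinner.symm)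
      (hfoot ▸ smul_add_smul_mem_convexHull_zero_sub_add hy le_rfl), hinner,
      max_eq_left (by linarith)]

end Distance

/-- The unit vector at angle `θ`. Polar coordinates are written `r • unitVec θ`, so that the
distance computations can be done in the orthonormal frame `unitVec β`, `unitVec (β + π / 2)`. -/
noncomputable def unitVec (θ : ℝ) : EuclideanSpace ℝ (Fin 2) := pt (cos θ) (sin θ)

theorem pt_mul_cos_mul_sin (r θ : ℝ) : pt (r * cos θ) (r * sin θ) = r • unitVec θ := by
  ext i
  fin_cases i <;> simp [pt, unitVec]

theorem unitVec_eq_cos_smul_add_sin_smul (θ β : ℝ) :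
    unitVec θ = cos (θ - β) • unitVec β + sin (θ - β) • unitVec (β + π / 2) := by
  obtain ⟨φ, rfl⟩ : ∃ φ, θ = φ + β := ⟨θ - β, by ring⟩
  ext i
  fin_cases i <;> simp [pt, unitVec, cos_add, sin_add] <;> ring

theorem inner_unitVec (θ β : ℝ) : ⟪unitVec θ, unitVec β⟫ = cos (θ - β) := by
  simp [unitVec, pt, PiLp.inner_apply, cos_sub, mul_comm]

theorem norm_unitVec (θ : ℝ) : ‖unitVec θ‖ = 1 := by
  rw [norm_eq_sqrt_real_inner, inner_unitVec, sub_self, cos_zero, sqrt_one]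

theorem continuous_unitVec : Continuous unitVec := by
  refine (PiLp.continuous_toLp 2 _).comp ?_
  fun_prop

theorem injOn_unitVec : InjOn unitVec (Ioc (-π) π) := by
  intro θ hθ β hβ h
  have hcos : cos θ = cos β := by simpa [unitVec, pt] using congrArg (fun p ↦ p 0) h
  have hsin : sin θ = sin β := by simpa [unitVec, pt] using congrArg (fun p ↦ p 1) h
  rw [← Angle.toReal_coe_eq_self_iff_mem_Ioc.2 hθ, Angle.cos_sin_inj hcos hsin,
    Angle.toReal_coe_eq_self_iff_mem_Ioc.2 hβ]

theorem tri_eq_convexHull_isosceles (α : ℝ) :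
    tri α = convexHull ℝ {0, cos (α / 2) • unitVec (α / 2) - sin (α / 2) • unitVec (α / 2 + π / 2),
      cos (α / 2) • unitVec (α / 2) + sin (α / 2) • unitVec (α / 2 + π / 2)} := by
  have hO : pt 0 0 = 0 := by simpa using pt_mul_cos_mul_sin 0 0
  have hA : pt 1 0 = cos (α / 2) • unitVec (α / 2) - sin (α / 2) • unitVec (α / 2 + π / 2) := by
    have h := unitVec_eq_cos_smul_add_sin_smul 0 (α / 2)
    rwa [unitVec, cos_zero, sin_zero, zero_sub, cos_neg, sin_neg, neg_smul, ← sub_eq_add_neg] at h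
  have hB : pt (cos α) (sin α) =
      cos (α / 2) • unitVec (α / 2) + sin (α / 2) • unitVec (α / 2 + π / 2) := by
    have h := unitVec_eq_cos_smul_add_sin_smul α (α / 2)
    rwa [sub_half] at h
  rw [tri, hO, hA, hB]

theorem abs_sin_le_sin_of_abs_le {φ β : ℝ} (hφ : |φ| ≤ β) (hβ : β ≤ π / 2) :
    |sin φ| ≤ sin β := by
  rw [abs_sin_eq_sin_abs_of_abs_le_pi (by linarith [pi_pos])]
  exact sin_le_sin_of_le_of_le_pi_div_two (by linarith [abs_nonneg φ, pi_pos]) hβ hφ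

theorem abs_sin_mul_cos_le_cos_mul_sin {φ β : ℝ} (hφ : |φ| ≤ β) (hβ : β ≤ π) :
    |sin φ| * cos β ≤ cos φ * sin β := by
  rw [abs_sin_eq_sin_abs_of_abs_le_pi (hφ.trans hβ), ← cos_abs φ]
  have h : 0 ≤ sin (β - |φ|) :=
    sin_nonneg_of_nonneg_of_le_pi (by linarith) (by linarith [abs_nonneg φ])
  rw [sin_sub] at h
  linarith

theorem cos_half_nonneg {α : ℝ} (hα : -π ≤ α) (hα' : α ≤ π) : 0 ≤ cos (α / 2) :=
  cos_nonneg_of_neg_pi_div_two_le_of_le (by linarith) (by linarith)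

theorem abs_sub_half_le {α θ : ℝ} (hθ : θ ∈ Icc 0 α) : |θ - α / 2| ≤ α / 2 :=
  abs_le.2 ⟨by linarith [hθ.1], by linarith [hθ.2]⟩

theorem infDist_smul_unitVec_tri {α r θ : ℝ} (hα : α ∈ Ioc 0 π) (hr : r ∈ Icc 0 1)
    (hθ : θ ∈ Icc 0 α) :
    Metric.infDist (r • unitVec θ) (tri α) = max (r * cos (θ - α / 2) - cos (α / 2)) 0 := by
  set φ := θ - α / 2
  have hφ : |φ| ≤ α / 2 := abs_sub_half_le hθ
  have hs : 0 < sin (α / 2) :=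
    sin_pos_of_pos_of_lt_pi (by linarith [hα.1]) (by linarith [hα.1, hα.2])
  have hpolar : r • unitVec θ = (r * cos φ) • unitVec (α / 2) +
      (r * sin φ / sin (α / 2)) • sin (α / 2) • unitVec (α / 2 + π / 2) := by
    rw [unitVec_eq_cos_smul_add_sin_smul θ (α / 2), smul_add, smul_smul, smul_smul, smul_smul,
      div_mul_cancel₀ _ hs.ne']
  have habs : |r * sin φ / sin (α / 2)| = r * |sin φ| / sin (α / 2) := by
    rw [abs_div, abs_mul, abs_of_nonneg hr.1, abs_of_pos hs]
  rw [hpolar, tri_eq_convexHull_isosceles,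
    infDist_convexHull_isosceles (norm_unitVec _) _
      (cos_half_nonneg (by linarith [hα.1, pi_pos]) hα.2)]
  · rw [habs, div_le_one hs]
    exact (mul_le_of_le_one_left (abs_nonneg _) hr.2).trans
      (abs_sin_le_sin_of_abs_le hφ (by linarith [hα.2]))
  · rw [habs, div_mul_eq_mul_div, div_le_iff₀ hs, mul_assoc, mul_assoc]
    exact mul_le_mul_of_nonneg_left
      (abs_sin_mul_cos_le_cos_mul_sin hφ (by linarith [hα.1, hα.2])) hr.1
  · rw [real_inner_smul_left, inner_unitVec, add_sub_cancel_left, cos_pi_div_two, mul_zero]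

theorem infDist_smul_unitVec_tri_of_notMem {α r θ : ℝ} (hα : α ∈ Ioc 0 π) (hr : r ∈ Icc 0 1)
    (hθ : θ ∈ Icc 0 α) (hnot : r • unitVec θ ∉ tri α) :
    Metric.infDist (r • unitVec θ) (tri α) = r * cos (θ - α / 2) - cos (α / 2) := by
  have hclosed : IsClosed (tri α) := ((toFinite _).isCompact_convexHull (𝕜 := ℝ)).isClosed
  have hne : (tri α).Nonempty := ⟨pt 0 0, subset_convexHull ℝ _ (by simp)⟩
  have hpos := (hclosed.notMem_iff_infDist_pos hne).1 hnot
  rw [infDist_smul_unitVec_tri hα hr hθ] at hpos ⊢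
  exact max_eq_left ((lt_max_iff.1 hpos).resolve_right (lt_irrefl 0)).le

section Polar

variable {F : Type*} [NormedAddCommGroup F] [NormedSpace ℝ F]

theorem setIntegral_eq_setIntegral_polar {S : Set (EuclideanSpace ℝ (Fin 2))}
    (hS : MeasurableSet S) (f : EuclideanSpace ℝ (Fin 2) → F) :
    ∫ x in S, f x = ∫ p in polarCoord.target ∩ (fun p ↦ p.1 • unitVec p.2) ⁻¹' S,
      p.1 • f (p.1 • unitVec p.2) := by
  let e := MeasurableEquiv.finTwoArrow.symm.trans (MeasurableEquiv.toLp 2 (Fin 2 → ℝ))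
  have he : MeasurePreserving e :=
    (EuclideanSpace.volume_preserving_symm_measurableEquiv_toLp (Fin 2)).symm.comp
      (volume_preserving_finTwoArrow ℝ).symm
  have he_polar : ∀ p : ℝ × ℝ, e (polarCoord.symm p) = p.1 • unitVec p.2 :=
    fun p ↦ pt_mul_cos_mul_sin p.1 p.2
  have hmeas : Measurable fun p : ℝ × ℝ ↦ p.1 • unitVec p.2 :=
    (continuous_fst.smul (continuous_unitVec.comp continuous_snd)).measurable
  rw [← integral_indicator hS, ← he.integral_comp e.measurableEmbedding,
    ← integral_comp_polarCoord_symm, ← setIntegral_indicator (hmeas hS)]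
  congr 1 with p
  rw [he_polar]
  by_cases hp : p.1 • unitVec p.2 ∈ S <;> simp [hp]

theorem sector_eq_image (α : ℝ) :
    sector α = (fun p : ℝ × ℝ ↦ p.1 • unitVec p.2) '' (Icc 0 1 ×ˢ Icc 0 α) := by
  ext p
  simp only [sector, pt_mul_cos_mul_sin, mem_ofPred_eq, mem_image, mem_prod, Prod.exists, and_assoc,
    eq_comm]

theorem measurableSet_sector (α : ℝ) : MeasurableSet (sector α) := by
  rw [sector_eq_image]
  exact ((isCompact_Icc.prod isCompact_Icc).image
    (continuous_fst.smul (continuous_unitVec.comp continuous_snd))).measurableSet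

theorem polarCoord_target_inter_preimage_sector {α : ℝ} (hα : α ≤ π) :
    polarCoord.target ∩ (fun p ↦ p.1 • unitVec p.2) ⁻¹' sector α =
      Ioc 0 1 ×ˢ (Icc 0 α ∩ Iio π) := by
  rw [sector_eq_image]
  ext ⟨r, θ⟩
  constructor
  · rintro ⟨⟨hr, hθ⟩, ⟨r', θ'⟩, ⟨hr', hθ'⟩, h⟩
    obtain rfl : r' = r := by
      simpa [norm_smul, norm_unitVec, abs_of_nonneg hr'.1, abs_of_pos (mem_Ioi.1 hr)]
        using congrArg norm h
    obtain rfl : θ' = θ := injOn_unitVec ⟨by linarith [hθ'.1, pi_pos], hθ'.2.trans hα⟩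
      (Ioo_subset_Ioc_self hθ) (smul_right_injective _ (ne_of_gt hr) h)
    exact ⟨⟨hr, hr'.2⟩, hθ', hθ.2⟩
  · rintro ⟨hr, hθ, hθπ⟩
    exact ⟨⟨hr.1, by linarith [hθ.1, pi_pos], hθπ⟩, (r, θ), ⟨Ioc_subset_Icc_self hr, hθ⟩, rfl⟩

theorem integral_sector {α : ℝ} (hα : α ∈ Icc 0 π) {f : EuclideanSpace ℝ (Fin 2) → F}
    (hf : Continuous f) :
    ∫ x in sector α, f x = ∫ θ in 0..α, ∫ r in 0..1, r • f (r • unitVec θ) := by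
  have hcont : Continuous fun p : ℝ × ℝ ↦ p.2 • f (p.2 • unitVec p.1) :=
    continuous_snd.smul (hf.comp (continuous_snd.smul (continuous_unitVec.comp continuous_fst)))
  have hint : IntegrableOn (fun p : ℝ × ℝ ↦ p.2 • f (p.2 • unitVec p.1)) (Ioc 0 α ×ˢ Ioc 0 1) :=
    (hcont.continuousOn.integrableOn_compact (isCompact_Icc.prod isCompact_Icc)).mono_set
      (prod_mono Ioc_subset_Icc_self Ioc_subset_Icc_self)
  have hangle : (Icc 0 α ∩ Iio π : Set ℝ) =ᵐ[volume] Ioc 0 α := by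
    have h := (ae_eq_refl (Icc 0 α)).inter (Iio_ae_eq_Iic (μ := volume) (a := π))
    rw [inter_eq_left.2 (Icc_subset_Iic_self.trans (Iic_subset_Iic.2 hα.2))] at h
    exact h.trans Ioc_ae_eq_Icc.symm
  calc ∫ x in sector α, f x
      = ∫ p in Ioc (0 : ℝ) 1 ×ˢ (Icc 0 α ∩ Iio π), p.1 • f (p.1 • unitVec p.2) := by
        rw [setIntegral_eq_setIntegral_polar (measurableSet_sector α),
          polarCoord_target_inter_preimage_sector hα.2]
    _ = ∫ p in Ioc (0 : ℝ) 1 ×ˢ Ioc 0 α, p.1 • f (p.1 • unitVec p.2) :=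
        setIntegral_congr_set (Measure.set_prod_ae_eq (ae_eq_refl _) hangle)
    _ = ∫ p in Ioc 0 α ×ˢ Ioc (0 : ℝ) 1, p.2 • f (p.2 • unitVec p.1) :=
        (setIntegral_prod_swap _ _ _).symm
    _ = ∫ θ in 0..α, ∫ r in 0..1, r • f (r • unitVec θ) := by
        rw [Measure.volume_eq_prod, setIntegral_prod _ hint, intervalIntegral.integral_of_le hα.1]
        simp only [intervalIntegral.integral_of_le zero_le_one]

end Polar

theorem integral_mul_max_sub_zero_sq {c k R : ℝ} (hc : 0 ≤ c) (hk : 0 < k) (hcR : c ≤ R * k) :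
    ∫ r in 0..R, r * max (r * k - c) 0 ^ 2 =
      R ^ 4 * k ^ 2 / 4 - 2 / 3 * R ^ 3 * c * k + R ^ 2 * c ^ 2 / 2 - c ^ 4 / (12 * k ^ 2) := by
  have hcont : Continuous fun r : ℝ ↦ r * max (r * k - c) 0 ^ 2 := by fun_prop
  have hbelow : ∫ r in 0..c / k, r * max (r * k - c) 0 ^ 2 = 0 := by
    rw [intervalIntegral.integral_congr (g := fun _ ↦ 0), intervalIntegral.integral_zero]
    intro r hr
    rw [uIcc_of_le (by positivity)] at hr
    have : r * k - c ≤ 0 := sub_nonpos.2 ((le_div_iff₀ hk).1 hr.2)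
    simp [max_eq_right this]
  have habove : ∫ r in c / k..R, r * max (r * k - c) 0 ^ 2 =
      ∫ r in c / k..R, r * (r * k - c) ^ 2 := by
    apply intervalIntegral.integral_congr
    intro r hr
    rw [uIcc_of_le ((div_le_iff₀ hk).2 hcR)] at hr
    have : 0 ≤ r * k - c := sub_nonneg.2 ((div_le_iff₀ hk).1 hr.1)
    simp only [max_eq_left this]
  have hderiv : ∀ r, HasDerivAt
      (fun r ↦ k ^ 2 / 4 * r ^ 4 - 2 / 3 * c * k * r ^ 3 + c ^ 2 / 2 * r ^ 2)
      (r * (r * k - c) ^ 2) r := fun r ↦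
    ((((hasDerivAt_pow 4 r).const_mul (k ^ 2 / 4)).sub
      ((hasDerivAt_pow 3 r).const_mul (2 / 3 * c * k))).add
      ((hasDerivAt_pow 2 r).const_mul (c ^ 2 / 2))).congr_deriv (by push_cast; ring)
  rw [← intervalIntegral.integral_add_adjacent_intervals
    (hcont.intervalIntegrable 0 (c / k)) (hcont.intervalIntegrable (c / k) R), hbelow, habove,
    intervalIntegral.integral_eq_sub_of_hasDerivAt (fun r _ ↦ hderiv r)
      ((by fun_prop : Continuous fun r ↦ r * (r * k - c) ^ 2).intervalIntegrable _ _)]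
  field_simp
  ring

theorem integral_one_div_cos_sq {a b : ℝ} (h : ∀ φ ∈ uIcc a b, cos φ ≠ 0) :
    ∫ φ in a..b, 1 / cos φ ^ 2 = tan b - tan a :=
  intervalIntegral.integral_eq_sub_of_hasDerivAt (fun φ hφ ↦ hasDerivAt_tan (h φ hφ))
    (ContinuousOn.intervalIntegrable (continuousOn_const.div (by fun_prop)
      fun φ hφ ↦ pow_ne_zero 2 (h φ hφ)))

theorem integral_sub_const_div_cos_sq {a c : ℝ} (ha : |a| < π / 2) :
    ∫ φ in -a..a, (cos φ ^ 2 / 4 - 2 / 3 * c * cos φ + c ^ 2 / 2 - c ^ 4 / (12 * cos φ ^ 2)) =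
      (a + sin a * cos a) / 4 - 4 / 3 * c * sin a + a * c ^ 2 - c ^ 4 * tan a / 6 := by
  have hne : ∀ φ ∈ uIcc (-a) a, cos φ ≠ 0 := fun φ hφ ↦
    (cos_pos_of_mem_Ioo (ordConnected_Ioo.uIcc_subset (abs_lt.1 ((abs_neg a).trans_lt ha))
      (abs_lt.1 ha) hφ)).ne'
  have hpoly : ∫ φ in -a..a, (cos φ ^ 2 / 4 - 2 / 3 * c * cos φ + c ^ 2 / 2) =
      (a + sin a * cos a) / 4 - 4 / 3 * c * sin a + a * c ^ 2 := by
    rw [intervalIntegral.integral_add (Continuous.intervalIntegrable (by fun_prop) _ _)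
        intervalIntegrable_const,
      intervalIntegral.integral_sub (Continuous.intervalIntegrable (by fun_prop) _ _)
        (Continuous.intervalIntegrable (by fun_prop) _ _),
      intervalIntegral.integral_div, intervalIntegral.integral_const_mul, integral_cos_sq,
      integral_cos, intervalIntegral.integral_const, sin_neg, cos_neg, smul_eq_mul]
    ring
  have htan : ∫ φ in -a..a, c ^ 4 / (12 * cos φ ^ 2) = c ^ 4 * tan a / 6 := by
    have hdiv : ∀ φ, c ^ 4 / (12 * cos φ ^ 2) = c ^ 4 / 12 * (1 / cos φ ^ 2) := fun φ ↦ by ring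
    simp only [hdiv]
    rw [intervalIntegral.integral_const_mul, integral_one_div_cos_sq hne, tan_neg]
    ring
  have htan_int : IntervalIntegrable (fun φ ↦ c ^ 4 / (12 * cos φ ^ 2)) volume (-a) a :=
    ContinuousOn.intervalIntegrable (continuousOn_const.div (by fun_prop)
      fun φ hφ ↦ mul_ne_zero (by norm_num) (pow_ne_zero 2 (hne φ hφ)))
  rw [intervalIntegral.integral_sub (Continuous.intervalIntegrable (by fun_prop) _ _) htan_int,
    hpoly, htan]

theorem integral_sub_cos_pow_four_div_cos_sq {a : ℝ} (ha : |a| ≤ π / 2) :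
    ∫ φ in -a..a, (cos φ ^ 2 / 4 - 2 / 3 * cos a * cos φ + cos a ^ 2 / 2 -
        cos a ^ 4 / (12 * cos φ ^ 2)) =
      a / 4 - 13 / 12 * (sin a * cos a) + a * cos a ^ 2 - sin a * cos a ^ 3 / 6 := by
  -- At `|a| = π / 2` the tangent blows up, but its coefficient `cos a ^ 4` vanishes.
  rcases ha.eq_or_lt with ha | ha
  · have hcos : cos a = 0 := by rw [← cos_abs, ha, cos_pi_div_two]
    simp [hcos, integral_cos_sq]
  · have : 0 < cos a := cos_pos_of_mem_Ioo (abs_lt.1 ha)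
    rw [integral_sub_const_div_cos_sq ha, tan_eq_sin_div_cos]
    field_simp
    ring

theorem integral_mul_infDist_tri_sq {α θ : ℝ} (hα : α ∈ Ioc 0 π) (hθ : θ ∈ Ioo 0 α) :
    ∫ r in 0..1, r * Metric.infDist (r • unitVec θ) (tri α) ^ 2 =
      cos (θ - α / 2) ^ 2 / 4 - 2 / 3 * cos (α / 2) * cos (θ - α / 2) + cos (α / 2) ^ 2 / 2 -
        cos (α / 2) ^ 4 / (12 * cos (θ - α / 2) ^ 2) := by
  have hθ' : θ ∈ Icc 0 α := Ioo_subset_Icc_self hθ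
  have hdist : ∫ r in 0..1, r * Metric.infDist (r • unitVec θ) (tri α) ^ 2 =
      ∫ r in 0..1, r * max (r * cos (θ - α / 2) - cos (α / 2)) 0 ^ 2 := by
    apply intervalIntegral.integral_congr
    intro r hr
    rw [uIcc_of_le zero_le_one] at hr
    simp only [infDist_smul_unitVec_tri hα hr hθ']
  have hk : 0 < cos (θ - α / 2) :=
    cos_pos_of_mem_Ioo ⟨by linarith [hθ.1, hα.2], by linarith [hθ.2, hα.2]⟩
  have hck : cos (α / 2) ≤ cos (θ - α / 2) := by
    rw [← cos_abs (θ - α / 2)]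
    exact cos_le_cos_of_nonneg_of_le_pi (abs_nonneg _) (by linarith [hα.1, hα.2])
      (abs_sub_half_le hθ')
  rw [hdist, integral_mul_max_sub_zero_sq (cos_half_nonneg (by linarith [hα.1, pi_pos]) hα.2) hk
    (hck.trans_eq (one_mul _).symm)]
  ring

theorem setIntegral_sector_infDist_tri_sq {α : ℝ} (hα : α ∈ Ioc 0 π) :
    ∫ x in sector α, Metric.infDist x (tri α) ^ 2 = π * Ifun α := by
  have hcont : Continuous fun x ↦ Metric.infDist x (tri α) ^ 2 :=
    (Metric.continuous_infDist_pt _).pow 2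
  have hsin : sin (α / 2) * cos (α / 2) = sin α / 2 := by
    have h := sin_two_mul (α / 2)
    rw [mul_div_cancel₀ α two_ne_zero] at h
    linarith
  calc ∫ x in sector α, Metric.infDist x (tri α) ^ 2
      = ∫ θ in 0..α, ∫ r in 0..1, r * Metric.infDist (r • unitVec θ) (tri α) ^ 2 :=
        integral_sector (Ioc_subset_Icc_self hα) hcont
    _ = ∫ θ in 0..α, (cos (θ - α / 2) ^ 2 / 4 - 2 / 3 * cos (α / 2) * cos (θ - α / 2) +
          cos (α / 2) ^ 2 / 2 - cos (α / 2) ^ 4 / (12 * cos (θ - α / 2) ^ 2)) :=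
        intervalIntegral.integral_congr_Ioo_of_le hα.1.le
          fun _ hθ ↦ integral_mul_infDist_tri_sq hα hθ
    _ = ∫ φ in -(α / 2)..α / 2, (cos φ ^ 2 / 4 - 2 / 3 * cos (α / 2) * cos φ +
          cos (α / 2) ^ 2 / 2 - cos (α / 2) ^ 4 / (12 * cos φ ^ 2)) := by
        rw [intervalIntegral.integral_comp_sub_right (fun φ ↦ cos φ ^ 2 / 4 -
          2 / 3 * cos (α / 2) * cos φ + cos (α / 2) ^ 2 / 2 - cos (α / 2) ^ 4 / (12 * cos φ ^ 2)),
          zero_sub, sub_half]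
    _ = π * Ifun α := by
        have hhalf : |α / 2| ≤ π / 2 := abs_le.2 ⟨by linarith [hα.1, pi_pos], by linarith [hα.2]⟩
        rw [integral_sub_cos_pow_four_div_cos_sq hhalf, hsin, Ifun]
        field_simp
        ring

theorem sector_integral (α : ℝ) (hα : α ∈ Set.Ioc (0 : ℝ) π) :
    (1 / π) * (∫ x in sector α, Metric.infDist x (tri α) ^ 2 ∂volume) = Ifun α ∧
    (∀ r θ : ℝ, r ∈ Set.Icc (0 : ℝ) 1 → θ ∈ Set.Icc (0 : ℝ) α →
      pt (r * Real.cos θ) (r * Real.sin θ) ∉ tri α →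
      Metric.infDist (pt (r * Real.cos θ) (r * Real.sin θ)) (tri α) =
        r * Real.cos (θ - α / 2) - Real.cos (α / 2)) := by
  refine ⟨?_, fun r θ hr hθ hnot ↦ ?_⟩
  · rw [setIntegral_sector_infDist_tri_sq hα, one_div, inv_mul_cancel_left₀ pi_ne_zero]
  · rw [pt_mul_cos_mul_sin] at hnot ⊢
    exact infDist_smul_unitVec_tri_of_notMem hα hr hθ hnot
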